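/- arXiv:1905.05119 — 6 statements merged into one kernel-verified Lean document; each statement's English description precedes it below -/
import Mathlib

section
/- Let (V, E) be a finite DAG with execution times X : V → ℕ and let S_X be the ASAP start-time function. Then for every vertex v and every path v_1, …, v_t from a source to v (so v_t = v, v_1 is a source, and E v_j v_{j+1} for all 1 ≤ j < t), the start time S_X v is at least the distance of that path, i.e., S_X v ≥ Σ_{j=1}^{t−1} X v_j. -/
open scoped Classical

/-!
Each edge `E u w` forces `S u + X u ≤ S w`, since `S w` is a maximum over the predecessors
of `w`. Telescoping this inequality along the path gives
`S (head) + distance ≤ S (last)`, and `S (head) ≥ 0`.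
-/

/-- The telescoped inequality along a nonempty path `a :: l`, keeping the start time of the
first vertex so that the induction on the path goes through. -/
lemma start_add_sum_le_start_last {V : Type*} (E : V → V → Prop) (X S : V → ℕ)
    (hstep : ∀ u w : V, E u w → S u + X u ≤ S w) (l : List V) (a : V)
    (h : List.IsChain E (a :: l)) :
    S a + (((a :: l).dropLast).map X).sum ≤ S ((a :: l).getLast (List.cons_ne_nil a l)) := by
  induction l generalizing a with
  | nil => simp
  | cons b l ih =>
    rw [List.isChain_cons_cons] at h
    have h1 := hstep a b h.1
    have h2 := ih b h.2
    rw [List.dropLast_cons_cons, List.map_cons, List.sum_cons,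
      List.getLast_cons (List.cons_ne_nil b l)]
    omega

/-- Let `S` be the ASAP start-time function of a finite DAG `(V, E)`
with execution times `X`.  For every vertex `v` and every path `v₁, …, v_t` from a
source to `v` (given as a nonempty list `p` with `E`-consecutive elements, whose
head is a source and whose last element is `v`), the start time `S v` is at least
the distance of that path, i.e. the sum of `X` over the path excluding `v` itself. -/
theorem asap_start_ge_path_distance {V : Type*} [Fintype V] (E : V → V → Prop)
    (hE : ∀ v : V, ¬ Relation.TransGen E v v) (X S : V → ℕ)
    (hS : ∀ v : V,
      S v = (Finset.univ.filter (fun u => E u v)).sup (fun u => S u + X u))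
    (v : V) (p : List V) (hp : p ≠ []) (hchain : List.Chain' E p)
    (hsrc : ∀ u : V, ¬ E u (p.head hp)) (hlast : p.getLast hp = v) :
    (p.dropLast.map X).sum ≤ S v := by
  have hstep : ∀ u w : V, E u w → S u + X u ≤ S w := by
    intro u w huw
    rw [hS w]
    exact Finset.le_sup (f := fun u => S u + X u) (by simpa using huw)
  subst hlast
  cases p with
  | nil => exact absurd rfl hp
  | cons a l =>
    exact le_trans (Nat.le_add_left _ _) (start_add_sum_le_start_last E X S hstep l a hchain)
end

section
/- Let (V, E) be a finite DAG with execution times X : V → ℕ and let S_X be the ASAP start-time function. Then for every vertex v, S_X v equals the maximum, over all paths from a source to v, of the distance of the path; i.e., S_X v = max over paths v_1, …, v_t (with v_t = v, v_1 a source, E v_j v_{j+1} for 1 ≤ j < t) of Σ_{j=1}^{t−1} X v_j. (In a finite DAG every vertex admits at least one such path, so the maximum is over a nonempty finite set.) -/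
/-!
Appending an edge `E u v` to a path ending at `u` adds exactly `X u` to its distance, so path
distances obey the same recursion as `S`. The upper bound follows by induction on the path, removing
its last vertex (`path_distance_le`). Attainment follows by well-founded induction along `E`, since
an acyclic relation on a finite type is well founded (`exists_path_distance_eq`): extend a
longest path to a predecessor that realises the maximum defining `S v`.
-/

open scoped Classical

/-- Only the inequality `S u + X u ≤ S v` along edges is needed; the path may start anywhere. -/
theorem path_distance_le {V : Type*} (E : V → V → Prop) (X S : V → ℕ)
    (hS : ∀ u v, E u v → S u + X u ≤ S v) (p : List V) :
    ∀ hp : p ≠ [], List.IsChain E p → (p.dropLast.map X).sum ≤ S (p.getLast hp) := by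
  induction p using List.reverseRecOn with
  | nil => intro hp; exact absurd rfl hp
  | append_singleton q v ih =>
    intro _ hc
    rw [List.isChain_append] at hc
    obtain ⟨hq, -, hlast⟩ := hc
    simp only [List.dropLast_concat, List.getLast_append_singleton]
    rcases List.eq_nil_or_concat q with rfl | ⟨r, u, rfl⟩
    · simp
    · have h1 := ih (by simp) hq
      have h2 := hS u v (hlast u (by simp) v (by simp))
      simp at h1 ⊢
      omega

theorem exists_path_distance_eq {V : Type*} [Fintype V] (E : V → V → Prop)
    (hE : ∀ v : V, ¬ Relation.TransGen E v v) (X S : V → ℕ)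
    (hS : ∀ v : V,
      S v = (Finset.univ.filter (fun u => E u v)).sup (fun u => S u + X u))
    (v : V) :
    ∃ (p : List V) (hp : p ≠ []), List.IsChain E p ∧ (∀ u : V, ¬ E u (p.head hp)) ∧
      p.getLast hp = v ∧ (p.dropLast.map X).sum = S v := by
  have wf : WellFounded E := by
    have : Std.Irrefl (Relation.TransGen E) := ⟨hE⟩
    exact Subrelation.wf (fun h => Relation.TransGen.single h)
      (Finite.wellFounded_of_trans_of_irrefl (Relation.TransGen E))
  induction v using wf.induction with
  | _ v ih =>
    by_cases hv : ∃ u, E u v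
    · obtain ⟨w, hw⟩ := hv
      obtain ⟨u, hu, hmax⟩ := Finset.exists_mem_eq_sup
        (Finset.univ.filter (fun u => E u v)) ⟨w, by simpa using hw⟩ (fun u => S u + X u)
      have huv : E u v := by simpa using hu
      obtain ⟨p, hp, hc, hsrc, hl, hd⟩ := ih u huv
      refine ⟨p ++ [v], by simp, ?_, ?_, by simp, ?_⟩
      · rw [List.isChain_append]
        refine ⟨hc, by simp, ?_⟩
        intro x hx y hy
        rw [List.getLast?_eq_getLast_of_ne_nil hp, hl] at hx
        simp at hx hy
        subst hx hy
        exact huv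
      · rwa [List.head_append_of_ne_nil hp]
      · rw [hS v, hmax, ← hd, List.dropLast_concat]
        conv_lhs => rw [← List.dropLast_append_getLast hp, hl]
        simp
    · push Not at hv
      refine ⟨[v], by simp, by simp, by simpa using hv, by simp, ?_⟩
      -- A source has start time `0`, the supremum over the empty set of predecessors.
      rw [hS v]
      simp [hv]

/-- Let `S` be the ASAP start-time function of a finite DAG `(V, E)`
with execution times `X`.  For every vertex `v`, the start time `S v` is the
maximum (`IsGreatest`: both attained and an upper bound) over all paths from a
source to `v` of the distance of the path, i.e. the sum of `X` over the path
excluding `v` itself. -/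
theorem asap_start_eq_max_path_distance {V : Type*} [Fintype V] (E : V → V → Prop)
    (hE : ∀ v : V, ¬ Relation.TransGen E v v) (X S : V → ℕ)
    (hS : ∀ v : V,
      S v = (Finset.univ.filter (fun u => E u v)).sup (fun u => S u + X u))
    (v : V) :
    IsGreatest {d : ℕ | ∃ (p : List V) (hp : p ≠ []),
        List.Chain' E p ∧ (∀ u : V, ¬ E u (p.head hp)) ∧ p.getLast hp = v ∧
        (p.dropLast.map X).sum = d} (S v) := by
  refine ⟨exists_path_distance_eq E hE X S hS v, ?_⟩
  rintro d ⟨p, hp, hc, -, rfl, rfl⟩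
  refine path_distance_le E X S (fun u w h => ?_) p hp hc
  rw [hS w]
  exact Finset.le_sup (f := fun u => S u + X u) (by simpa using h)
end

section
/- Let (V, E) be a finite DAG with V nonempty, execution times X : V → ℕ, and ASAP start-time function S_X. Then the makespan of the ASAP schedule equals the length of a longest path in the DAG: max over vertices v of (S_X v + X v) = max over all paths v_1, …, v_t from a source (v_1 a source and E v_j v_{j+1} for 1 ≤ j < t) of Σ_{j=1}^{t} X v_j. (This common value is the critical path length, or span, of the DAG.) -/
/-!
The start-time recursion says `S u + X u ≤ S v` along every edge `u → v`, with equality for some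
predecessor `u` of each `v` that is not a source. Telescoping the inequality along a path bounds the
path's length by the finishing time of its last vertex (`start_add_sum_le_makespan`). Conversely,
following the equality edges backwards from a vertex that finishes last reaches a source, since the
DAG is finite, and the path so traced has length equal to the makespan
(`exists_source_path_extension`).
-/

open scoped Classical

/-- A path run from the start time of its first vertex, which need not be a source, ends no later
than the makespan. -/
theorem start_add_sum_le_makespan {V : Type*} [Fintype V] {E : V → V → Prop} {X S : V → ℕ}
    (hS : ∀ v : V,
      S v = (Finset.univ.filter (fun u => E u v)).sup (fun u => S u + X u))
    (l : List V) (a : V) (h : List.IsChain E (a :: l)) :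
    S a + ((a :: l).map X).sum ≤ Finset.univ.sup (fun v => S v + X v) := by
  induction l generalizing a with
  | nil =>
    simpa using Finset.le_sup (f := fun v => S v + X v) (Finset.mem_univ a)
  | cons b l ih =>
    obtain ⟨hab, hl⟩ := List.isChain_cons_cons.mp h
    have hle : S a + X a ≤ S b := by
      rw [hS b]
      exact Finset.le_sup (f := fun u => S u + X u) (by simpa using hab)
    have := ih b hl
    simp only [List.map_cons, List.sum_cons] at this ⊢
    omega

/-- Every path extends backwards to a path from a source, the added initial segment having length
exactly the start time of the original first vertex. -/
theorem exists_source_path_extension {V : Type*} [Fintype V] {E : V → V → Prop}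
    (hE : ∀ v : V, ¬ Relation.TransGen E v v) {X S : V → ℕ}
    (hS : ∀ v : V,
      S v = (Finset.univ.filter (fun u => E u v)).sup (fun u => S u + X u))
    (v : V) (l : List V) (h : List.IsChain E (v :: l)) :
    ∃ (p : List V) (hp : p ≠ []), List.IsChain E p ∧ (∀ u : V, ¬ E u (p.head hp)) ∧
      (p.map X).sum = S v + ((v :: l).map X).sum := by
  have : Std.Irrefl (Relation.TransGen E) := ⟨hE⟩
  have hwf : WellFounded (Relation.TransGen E) := Finite.wellFounded_of_trans_of_irrefl _
  induction v using hwf.induction generalizing l with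
  | _ v ih =>
    rcases (Finset.univ.filter (fun u => E u v)).eq_empty_or_nonempty with he | hne
    · refine ⟨v :: l, by simp, h, fun u hu => ?_, ?_⟩
      · have hmem : u ∈ Finset.univ.filter (fun u => E u v) := by simpa using hu
        simp [he] at hmem
      · rw [hS v, he]
        simp
    · obtain ⟨u, hu, hsup⟩ := Finset.exists_mem_eq_sup _ hne (fun u => S u + X u)
      have huv : E u v := by simpa using hu
      obtain ⟨p, hp, hc, hs, hsum⟩ :=
        ih u (.single huv) (v :: l) (List.isChain_cons_cons.mpr ⟨huv, h⟩)
      refine ⟨p, hp, hc, hs, ?_⟩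
      rw [hsum, hS v, hsup]
      simp only [List.map_cons, List.sum_cons]
      omega

/-- Let `S` be the ASAP start-time function of a finite DAG `(V, E)`
(with `V` nonempty) with execution times `X`.  The makespan of the ASAP schedule,
`max over v of (S v + X v)`, equals the length of a longest path starting at a
source: it is the greatest element of the set of sums `Σ_{j=1}^{t} X v_j` over all
paths `v₁, …, v_t` with `v₁` a source and `E v_j v_{j+1}` for `1 ≤ j < t`. -/
theorem asap_makespan_eq_span {V : Type*} [Fintype V] [Nonempty V]
    (E : V → V → Prop)
    (hE : ∀ v : V, ¬ Relation.TransGen E v v) (X S : V → ℕ)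
    (hS : ∀ v : V,
      S v = (Finset.univ.filter (fun u => E u v)).sup (fun u => S u + X u)) :
    IsGreatest {d : ℕ | ∃ (p : List V) (hp : p ≠ []),
        List.Chain' E p ∧ (∀ u : V, ¬ E u (p.head hp)) ∧ (p.map X).sum = d}
      (Finset.univ.sup (fun v => S v + X v)) := by
  constructor
  · obtain ⟨v, -, hv⟩ :=
      Finset.exists_mem_eq_sup Finset.univ Finset.univ_nonempty (fun v => S v + X v)
    obtain ⟨p, hp, hc, hs, hsum⟩ := exists_source_path_extension hE hS v [] (by simp)
    exact ⟨p, hp, hc, hs, by rw [hsum, hv]; simp⟩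
  · rintro d ⟨p, hp, hc, -, rfl⟩
    cases p with
    | nil => exact absurd rfl hp
    | cons a l => exact le_trans (Nat.le_add_left _ _) (start_add_sum_le_makespan hS l a hc)
end

section
/- Let (V, E) be a finite DAG with execution times X : V → ℕ and ASAP start-time function S_X, and let Δ : ℕ be a carry-out window length. Then for every start assignment σ : V → ℕ that is feasible for X (σ v ≥ σ u + X u for every edge (u, v)), the carry-out workload of σ is at most that of the ASAP schedule: Σ_{v ∈ V} min(X v, Δ ∸ σ v) ≤ Σ_{v ∈ V} min(X v, Δ ∸ S_X v). In other words, for fixed execution times, the workload generated in the window [0, Δ) by the schedule in which every subtask starts as soon as all of its predecessors finish is an upper bound on the carry-out workload of any precedence-respecting schedule with those execution times. -/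
open scoped Classical

/-- Let `S` be the ASAP start-time function of a finite DAG `(V, E)`
with execution times `X`, and `Δ` a carry-out window length.  For every start
assignment `σ` feasible for `X` (i.e. `σ v ≥ σ u + X u` for every edge `(u, v)`),
the carry-out workload of `σ` is at most that of the ASAP schedule:
`Σ_v min (X v) (Δ - σ v) ≤ Σ_v min (X v) (Δ - S v)` (truncated subtraction). -/
theorem carryout_workload_le_asap {V : Type*} [Fintype V] (E : V → V → Prop)
    (hE : ∀ v : V, ¬ Relation.TransGen E v v) (X S : V → ℕ)
    (hS : ∀ v : V,
      S v = (Finset.univ.filter (fun u => E u v)).sup (fun u => S u + X u))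
    (Δ : ℕ) (σ : V → ℕ) (hσ : ∀ u v : V, E u v → σ u + X u ≤ σ v) :
    ∑ v : V, min (X v) (Δ - σ v) ≤ ∑ v : V, min (X v) (Δ - S v) := by
  -- A finite acyclic relation is well-founded, since its transitive closure is a strict order.
  have hwf : WellFounded E := by
    haveI : Std.Irrefl (Relation.TransGen E) := ⟨hE⟩
    exact Subrelation.wf (fun h => Relation.TransGen.single h)
      (Finite.wellFounded_of_trans_of_irrefl (Relation.TransGen E))
  -- The ASAP schedule starts every vertex no later than any feasible schedule does.
  have hle : ∀ v, S v ≤ σ v := by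
    intro v
    induction v using hwf.induction with
    | _ v ih =>
      rw [hS v]
      refine Finset.sup_le fun u hu => ?_
      have huv : E u v := (Finset.mem_filter.mp hu).2
      exact (Nat.add_le_add_right (ih u huv) _).trans (hσ u v huv)
  exact Finset.sum_le_sum fun v _ => min_le_min_left _ (Nat.sub_le_sub_left (hle v) Δ)
end

section
/- Let T > 0, L, R, Δ be real numbers with 0 ≤ L ≤ R, let r : ℕ → ℝ be a sporadic release sequence, i.e., r (j+1) ≥ r j + T for all j, and let t be the start of a problem window of length Δ. Assume the first job is a carry-in job released strictly before the window but no earlier than t − (R − L), i.e., t − (R − L) ≤ r 0 < t. Call job j a body job if it is released within the window and it is not the last job released within the window, i.e., t ≤ r j and r (j+1) < t + Δ. Then the number of body jobs is at most max(⌊(Δ − L + R)/T⌋ − 1, 0); consequently, if every job generates workload at most C ≥ 0, the total workload generated by the body jobs is at most max((⌊(Δ − L + R)/T⌋ − 1) · C, 0). -/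
/-!
Job `0` precedes the window, so a body job `j` has `j ≥ 1`. By the minimum inter-arrival time,
`(j + 1) T ≤ r (j + 1) - r 0 < Δ - L + R`, hence `j + 1 ≤ ⌊(Δ - L + R) / T⌋`. Body jobs thus
have indices between `1` and `⌊(Δ - L + R) / T⌋ - 1`, which gives the count; bounding each
summand by `C` gives the workload.
-/

lemma release_add_mul_le {T : ℝ} {r : ℕ → ℝ} (hr : ∀ j : ℕ, r j + T ≤ r (j + 1)) (j : ℕ) :
    r 0 + j * T ≤ r j := by
  induction j with
  | zero => simp
  | succ k ih =>
    have := hr k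
    push_cast
    linarith

/-- Sporadic releases `r : ℕ → ℝ` with minimum inter-arrival time
`T > 0`, problem window `[t, t + Δ)`, span `L` and worst-case response time `R`
with `0 ≤ L ≤ R`.  The carry-in job (job `0`) is released strictly before the
window but no earlier than `t - (R - L)`.  Job `j` is a *body job* if
`t ≤ r j` and `r (j+1) < t + Δ`.  Then the set `B` of body jobs is finite with
at most `max (⌊(Δ - L + R)/T⌋ - 1) 0` elements, and if every job `j` generates
workload `0 ≤ w j ≤ C` (with `C ≥ 0`), the total workload of the body jobs is at
most `max ((⌊(Δ - L + R)/T⌋ - 1) * C) 0`. -/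
theorem body_jobs_bound (T L R Δ t C : ℝ) (hT : 0 < T) (hL0 : 0 ≤ L) (hLR : L ≤ R)
    (hC : 0 ≤ C) (r : ℕ → ℝ) (hr : ∀ j : ℕ, r j + T ≤ r (j + 1))
    (hci₁ : t - (R - L) ≤ r 0) (hci₂ : r 0 < t) :
    ({j : ℕ | t ≤ r j ∧ r (j + 1) < t + Δ}).Finite ∧
    (({j : ℕ | t ≤ r j ∧ r (j + 1) < t + Δ}).ncard : ℤ) ≤
      max (⌊(Δ - L + R) / T⌋ - 1) 0 ∧
    ∀ w : ℕ → ℝ, (∀ j : ℕ, 0 ≤ w j) → (∀ j : ℕ, w j ≤ C) →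
      ∑ᶠ j ∈ {j : ℕ | t ≤ r j ∧ r (j + 1) < t + Δ}, w j ≤
        max (((⌊(Δ - L + R) / T⌋ : ℝ) - 1) * C) 0 := by
  set K : ℤ := ⌊(Δ - L + R) / T⌋ with hK
  set B : Set ℕ := {j : ℕ | t ≤ r j ∧ r (j + 1) < t + Δ} with hB
  -- `Int.toNat` truncates at `0`, matching the `max _ 0` of the bound.
  have hsub : B ⊆ (Finset.Icc 1 (K - 1).toNat : Finset ℕ) := by
    rintro j ⟨h1, h2⟩
    have hj : 1 ≤ j := by
      rcases Nat.eq_zero_or_pos j with rfl | h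
      · linarith
      · exact h
    have h3 := release_add_mul_le hr (j + 1)
    have h4 : ((j : ℤ) + 1) ≤ K := by
      rw [hK, Int.le_floor, le_div_iff₀ hT]
      push_cast at h3 ⊢
      linarith
    rw [Finset.coe_Icc, Set.mem_Icc]
    omega
  have hfin : B.Finite := (Finset.finite_toSet _).subset hsub
  have hcard : (B.ncard : ℤ) ≤ max (K - 1) 0 := by
    have h := Set.ncard_le_ncard hsub (Finset.finite_toSet _)
    rw [Set.ncard_coe_finset, Nat.card_Icc] at h
    omega
  refine ⟨hfin, hcard, fun w _ hwC => ?_⟩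
  have hcardR : (B.ncard : ℝ) ≤ max ((K : ℝ) - 1) 0 := by exact_mod_cast hcard
  calc ∑ᶠ j ∈ B, w j = ∑ j ∈ hfin.toFinset, w j := finsum_mem_eq_finite_toFinset_sum _ hfin
    _ ≤ hfin.toFinset.card • C := Finset.sum_le_card_nsmul _ _ _ fun j _ => hwC j
    _ = B.ncard * C := by rw [nsmul_eq_mul, Set.ncard_eq_toFinset_card B hfin]
    _ ≤ max ((K : ℝ) - 1) 0 * C := mul_le_mul_of_nonneg_right hcardR hC
    _ = max (((K : ℝ) - 1) * C) 0 := by rw [max_mul_of_nonneg _ _ hC, zero_mul]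
end

section
/- Let (V, E) be a finite DAG with V nonempty and worst-case execution times C : V → ℕ. Let S = S_C be the ASAP start-time function for execution times C, and let L = max over v of (S v + C v) be the makespan of the full-WCET ASAP schedule. Then for every carry-in window length Δ : ℕ, the workload executed by this schedule during the final window [L ∸ Δ, L) equals Σ_{v ∈ V} (C v ∸ ((L ∸ S v) ∸ Δ)); that is, Σ_{v ∈ V} card({t : ℕ | L ∸ Δ ≤ t ∧ t < L ∧ S v ≤ t ∧ t < S v + C v}) = Σ_{v ∈ V} (C v ∸ ((L ∸ S v) ∸ Δ)), where ∸ is truncated subtraction on ℕ. (This is the carry-in workload formula: each subtask v contributes max(C v − max(L − S v − Δ, 0), 0) to the carry-in window.) -/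
open scoped Classical

/-- Carry-in workload formula.  Let `S` be the ASAP start-time
function of a finite nonempty DAG `(V, E)` for the worst-case execution times
`C : V → ℕ`, and `L = max over v of (S v + C v)` the makespan of the full-WCET
ASAP schedule (subtask `v` executes exactly during `[S v, S v + C v)`).  For any
carry-in window length `Δ`, the workload executed during the final window
`[L - Δ, L)` equals `Σ_v (C v - ((L - S v) - Δ))` (truncated subtraction),
i.e. each subtask `v` contributes `max (C v - max (L - S v - Δ, 0), 0)`. -/
theorem carryin_workload_formula {V : Type*} [Fintype V] [Nonempty V]
    (E : V → V → Prop) (hE : ∀ v : V, ¬ Relation.TransGen E v v)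
    (C S : V → ℕ)
    (hS : ∀ v : V,
      S v = (Finset.univ.filter (fun u => E u v)).sup (fun u => S u + C u))
    (L : ℕ) (hL : L = Finset.univ.sup (fun v => S v + C v)) (Δ : ℕ) :
    ∑ v : V, ({t : ℕ | L - Δ ≤ t ∧ t < L ∧ S v ≤ t ∧ t < S v + C v}).ncard =
      ∑ v : V, (C v - ((L - S v) - Δ)) := by
  refine Finset.sum_congr rfl fun v _ => ?_
  have hv : S v + C v ≤ L := by
    rw [hL]
    exact Finset.le_sup (f := fun v => S v + C v) (Finset.mem_univ v)
  -- Since `v` finishes by `L`, the bound `t < L` is redundant and the set is an interval.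
  have hset : {t : ℕ | L - Δ ≤ t ∧ t < L ∧ S v ≤ t ∧ t < S v + C v} =
      (Finset.Ico (max (L - Δ) (S v)) (S v + C v) : Set ℕ) := by
    ext t
    simp only [Set.mem_setOf_eq, Finset.coe_Ico, Set.mem_Ico]
    omega
  rw [hset, Set.ncard_coe_finset, Nat.card_Ico]
  omega
end
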